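/- arXiv:2507.05243 — 2 statements merged into one kernel-verified Lean document; each statement's English description precedes it below -/
import Mathlib

section
/- Let G be a finite group, let Irr(G) be a complete set of pairwise non-isomorphic irreducible complex representations of G (i.e. representatives of all isomorphism classes of finite-dimensional simple ℂ[G]-modules), let d_π denote the degree (ℂ-dimension) of π ∈ Irr(G), and let D = max_{π ∈ Irr(G)} d_π. Then (1/|G|) · Σ_{π ∈ Irr(G)} (d_π)³ ≤ 1 + (D − 1)·(1 − 1/|[G,G]|), where [G,G] denotes the commutator subgroup of G. -/
/-- A finite family of pairwise non-isomorphic finite-dimensional simple modules over an algebra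
over an algebraically closed field is jointly dense: the algebra surjects onto the product of
the linear endomorphism rings. -/
theorem IsSimpleModule.exists_smul_eq_of_pairwise {k A ι : Type*} [Field k] [IsAlgClosed k]
    [Ring A] [Algebra k A] [IsSemisimpleRing A] [Finite ι] (V : ι → Type*)
    [∀ i, AddCommGroup (V i)] [∀ i, Module A (V i)] [∀ i, Module k (V i)]
    [∀ i, IsScalarTower k A (V i)] [∀ i, IsSimpleModule A (V i)]
    [∀ i, FiniteDimensional k (V i)]
    (hpairwise : ∀ i j, Nonempty (V i ≃ₗ[A] V j) → i = j)
    (f : ∀ i, V i →ₗ[k] V i) : ∃ a : A, ∀ i v, a • v = f i v := by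
  classical
  have := Fintype.ofFinite ι
  have hcoord (φ : Module.End A (∀ i, V i)) (i : ι) : ∃ c : k, ∀ v, φ v i = c • v i := by
    have hoff (j : ι) (hj : j ≠ i) (w : V j) : φ (Pi.single j w) i = 0 := by
      rcases ((LinearMap.proj i).comp (φ.comp (LinearMap.single A V j))).bijective_or_eq_zero
        with h | h
      · exact absurd (hpairwise j i ⟨.ofBijective _ h⟩) hj
      · exact congr($h w)
    obtain ⟨c, hc⟩ := (IsSimpleModule.algebraMap_end_bijective_of_isAlgClosed k).2
      ((LinearMap.proj i).comp (φ.comp (LinearMap.single A V i)))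
    refine ⟨c, fun v ↦ ?_⟩
    have hdiag : φ (Pi.single i (v i)) i = c • v i := congr($hc (v i)).symm
    conv_lhs => rw [← Finset.univ_sum_single v, map_sum, Finset.sum_apply]
    rw [Finset.sum_eq_single i (fun j _ hj ↦ hoff j hj _) (by simp), hdiag]
  let F : Module.End (Module.End A (∀ i, V i)) (∀ i, V i) :=
    { toFun := fun v i ↦ f i (v i)
      map_add' := fun v w ↦ by ext; simp
      map_smul' := fun φ v ↦ by
        ext i
        obtain ⟨c, hc⟩ := hcoord φ i
        simp [hc] }
  let B i := Module.finBasis k (V i)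
  obtain ⟨a, ha⟩ := jacobson_density F (Finset.univ.image
    fun p : Σ i, Fin (Module.finrank k (V i)) ↦ Pi.single p.1 (B p.1 p.2))
  refine ⟨a, fun i v ↦ ?_⟩
  have key : Algebra.lsmul k k (V i) a = f i := by
    refine (B i).ext fun b ↦ ?_
    have := congr_fun (ha (Pi.single i (B i b))
      (Finset.mem_image.2 ⟨⟨i, b⟩, Finset.mem_univ _, rfl⟩)) i
    simpa [F] using this.symm
  exact congr($key v)

/-- The squares of the dimensions of pairwise non-isomorphic simple modules sum up to at most
the dimension of the algebra. -/
theorem IsSimpleModule.sum_finrank_sq_le {k A ι : Type*} [Field k] [IsAlgClosed k]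
    [Ring A] [Algebra k A] [IsSemisimpleRing A] [FiniteDimensional k A] [Fintype ι]
    (V : ι → Type*)
    [∀ i, AddCommGroup (V i)] [∀ i, Module A (V i)] [∀ i, Module k (V i)]
    [∀ i, IsScalarTower k A (V i)] [∀ i, IsSimpleModule A (V i)]
    [∀ i, FiniteDimensional k (V i)]
    (hpairwise : ∀ i j, Nonempty (V i ≃ₗ[A] V j) → i = j) :
    ∑ i, Module.finrank k (V i) ^ 2 ≤ Module.finrank k A := by
  have hsurj : Function.Surjective
      (LinearMap.pi fun i ↦ (Algebra.lsmul k k (V i) : A →ₐ[k] _).toLinearMap) := fun f ↦ by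
    obtain ⟨a, ha⟩ := exists_smul_eq_of_pairwise V hpairwise f
    exact ⟨a, funext fun i ↦ LinearMap.ext fun v ↦ ha i v⟩
  simpa [Module.finrank_pi_fintype, Module.finrank_linearMap, sq] using
    LinearMap.finrank_le_finrank_of_surjective hsurj

/-- Every linear character of `G` occurs in a complete family of irreducible complex
representations. -/
theorem MonoidAlgebra.exists_finrank_eq_one_of_monoidHom {G ι : Type*} [Group G]
    (V : ι → Type*) [∀ i, AddCommGroup (V i)]
    [∀ i, Module (MonoidAlgebra ℂ G) (V i)] [∀ i, Module ℂ (V i)]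
    [∀ i, IsScalarTower ℂ (MonoidAlgebra ℂ G) (V i)]
    (hcomplete : ∀ (W : Type) [AddCommGroup W] [Module (MonoidAlgebra ℂ G) W]
      [Module ℂ W] [IsScalarTower ℂ (MonoidAlgebra ℂ G) W],
      IsSimpleModule (MonoidAlgebra ℂ G) W → FiniteDimensional ℂ W →
        ∃ i : ι, Nonempty (W ≃ₗ[MonoidAlgebra ℂ G] V i))
    (χ : G →* ℂˣ) :
    ∃ i, Module.finrank ℂ (V i) = 1 ∧
      ∀ g (v : V i), MonoidAlgebra.single g (1 : ℂ) • v = (χ g : ℂ) • v := by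
  let L : MonoidAlgebra ℂ G →ₐ[ℂ] ℂ :=
    MonoidAlgebra.lift ℂ ℂ G ((Units.coeHom ℂ).comp χ)
  let _ : Module (MonoidAlgebra ℂ G) ℂ := Module.compHom ℂ L.toRingHom
  have hsmul (a : MonoidAlgebra ℂ G) (z : ℂ) : a • z = L a * z := rfl
  have : IsScalarTower ℂ (MonoidAlgebra ℂ G) ℂ :=
    ⟨fun c a z ↦ by simp [hsmul, mul_assoc]⟩
  have hs : IsSimpleModule (MonoidAlgebra ℂ G) ℂ := by
    rw [isSimpleModule_iff_toSpanSingleton_surjective]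
    refine ⟨inferInstance, fun z hz w ↦ ⟨algebraMap ℂ _ (w / z), ?_⟩⟩
    rw [LinearMap.toSpanSingleton_apply, hsmul, AlgHom.commutes]
    simp [hz]
  obtain ⟨i, ⟨e⟩⟩ := hcomplete ℂ hs inferInstance
  refine ⟨i, ?_, fun g v ↦ ?_⟩
  · rw [← (e.restrictScalars ℂ).finrank_eq, Module.finrank_self]
  · obtain ⟨z, rfl⟩ := e.surjective v
    have h1 : MonoidAlgebra.single g (1 : ℂ) • z = (χ g : ℂ) • z := by simp [hsmul, L]
    rw [← map_smul, h1]
    exact (e.restrictScalars ℂ).map_smul _ _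

/-- A finite group has as many linear complex characters as the order of its abelianization. -/
theorem Abelianization.card_monoidHom_units_complex (G : Type*) [Group G] [Finite G] :
    Nat.card (G →* ℂˣ) = Nat.card (Abelianization G) := by
  rw [Nat.card_congr (Abelianization.lift (G := G) (A := ℂˣ))]
  have : Finite (Abelianization G) := inferInstanceAs (Finite (G ⧸ commutator G))
  have : NeZero (Monoid.exponent (Abelianization G)) := ⟨Monoid.exponent_ne_zero_of_finite⟩
  exact CommGroup.card_monoidHom_of_hasEnoughRootsOfUnity _ ℂ

/-- Let `G` be a finite group, let `(V i)_{i : ι}` be a complete set of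
pairwise non-isomorphic irreducible complex representations of `G` (finite-dimensional simple
`ℂ[G]`-modules), and let `D` be the maximal degree.  Then
`(1/|G|) * Σ_i (dim V i)^3 ≤ 1 + (D - 1) * (1 - 1/|[G,G]|)`. -/
theorem johnson_formula_upper_bound
    (G : Type*) [Group G] [Finite G]
    (ι : Type*) [Fintype ι]
    (V : ι → Type*) [∀ i, AddCommGroup (V i)]
    [∀ i, Module (MonoidAlgebra ℂ G) (V i)]
    [∀ i, Module ℂ (V i)]
    [∀ i, IsScalarTower ℂ (MonoidAlgebra ℂ G) (V i)]
    (hsimple : ∀ i, IsSimpleModule (MonoidAlgebra ℂ G) (V i))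
    (hfd : ∀ i, FiniteDimensional ℂ (V i))
    (hpairwise : ∀ i j : ι,
      Nonempty (V i ≃ₗ[MonoidAlgebra ℂ G] V j) → i = j)
    (hcomplete : ∀ (W : Type) [AddCommGroup W] [Module (MonoidAlgebra ℂ G) W]
      [Module ℂ W] [IsScalarTower ℂ (MonoidAlgebra ℂ G) W],
      IsSimpleModule (MonoidAlgebra ℂ G) W → FiniteDimensional ℂ W →
        ∃ i : ι, Nonempty (W ≃ₗ[MonoidAlgebra ℂ G] V i))
    (D : ℕ) (hD : IsGreatest (Set.range fun i => Module.finrank ℂ (V i)) D) :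
    (1 / (Nat.card G : ℝ)) * ∑ i : ι, (Module.finrank ℂ (V i) : ℝ) ^ 3 ≤
      1 + ((D : ℝ) - 1) * (1 - 1 / (Nat.card (commutator G) : ℝ)) := by
  classical
  have hne : NeZero (Nat.card G : ℂ) := ⟨by exact_mod_cast Nat.card_pos.ne'⟩
  have hfdA : FiniteDimensional ℂ (MonoidAlgebra ℂ G) :=
    Module.Finite.of_basis (MonoidAlgebra.basis G ℂ)
  have hsq : ∑ i, Module.finrank ℂ (V i) ^ 2 ≤ Nat.card G := by
    have h := IsSimpleModule.sum_finrank_sq_le (k := ℂ) V hpairwise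
    rwa [Module.finrank_eq_nat_card_basis (MonoidAlgebra.basis G ℂ)] at h
  set S := Finset.univ.filter fun i ↦ Module.finrank ℂ (V i) = 1 with hS
  have hlin : Nat.card (Abelianization G) ≤ S.card := by
    choose c hc1 hc using MonoidAlgebra.exists_finrank_eq_one_of_monoidHom V hcomplete
    have hinj : Function.Injective fun χ ↦ (⟨c χ, by simp [hS, hc1]⟩ : S) := by
      intro χ ψ h
      replace h : c χ = c ψ := congr_arg Subtype.val h
      have hψ := hc ψ
      rw [← h] at hψ
      have := IsSimpleModule.nontrivial (MonoidAlgebra ℂ G) (V (c χ))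
      obtain ⟨v, hv⟩ := exists_ne (0 : V (c χ))
      ext g
      exact smul_left_injective ℂ hv ((hc χ g v).symm.trans (hψ g v))
    rw [← Abelianization.card_monoidHom_units_complex]
    simpa using Nat.card_le_card_of_injective _ hinj
  have hle i : Module.finrank ℂ (V i) ≤ D := hD.2 ⟨i, rfl⟩
  have hD1 : 1 ≤ D := by
    obtain ⟨i, hi⟩ := hD.1
    have := IsSimpleModule.nontrivial (MonoidAlgebra ℂ G) (V i)
    have : 0 < Module.finrank ℂ (V i) := Module.finrank_pos
    exact hi ▸ this
  have hcube : ∑ i, (Module.finrank ℂ (V i) : ℝ) ^ 3 ≤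
      D * ∑ i, (Module.finrank ℂ (V i) : ℝ) ^ 2 - (D - 1) * S.card := by
    have hcard : (S.card : ℝ) = ∑ i, if Module.finrank ℂ (V i) = 1 then (1 : ℝ) else 0 := by
      simp [hS]
    rw [hcard, Finset.mul_sum, Finset.mul_sum, ← Finset.sum_sub_distrib]
    refine Finset.sum_le_sum fun i _ ↦ ?_
    split_ifs with h
    · simp [h]
    · have : (Module.finrank ℂ (V i) : ℝ) ≤ D := by exact_mod_cast hle i
      nlinarith [sq_nonneg (Module.finrank ℂ (V i) : ℝ)]
  have hindex : (Nat.card G : ℝ) = Nat.card (Abelianization G) * Nat.card (commutator G) := by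
    exact_mod_cast Subgroup.card_eq_card_quotient_mul_card_subgroup (commutator G)
  have hG : (0 : ℝ) < Nat.card G := by exact_mod_cast Nat.card_pos
  have hG' : (0 : ℝ) < Nat.card (commutator G) := by exact_mod_cast Nat.card_pos
  have hsq' : ∑ i, (Module.finrank ℂ (V i) : ℝ) ^ 2 ≤ Nat.card G := by exact_mod_cast hsq
  have hlin' : (Nat.card (Abelianization G) : ℝ) ≤ S.card := by exact_mod_cast hlin
  have hD1' : (1 : ℝ) ≤ D := by exact_mod_cast hD1
  have hquot : (Nat.card G : ℝ) * (1 / Nat.card (commutator G)) =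
      Nat.card (Abelianization G) := by
    rw [hindex]; field_simp
  rw [one_div_mul_eq_div, div_le_iff₀ hG]
  calc _ ≤ _ := hcube
    _ ≤ (D : ℝ) * Nat.card G - (D - 1) * Nat.card (Abelianization G) := by
      have h₁ := mul_le_mul_of_nonneg_left hsq' (zero_le_one.trans hD1')
      have h₂ := mul_le_mul_of_nonneg_left hlin' (sub_nonneg.2 hD1')
      linarith
    _ = _ := by rw [← hquot]; ring
end

section
/- Let p be a prime and n ≥ 1, and let G = Hr_p(ℤ/p^nℤ) be the p-reduced Heisenberg group over the ring ℤ/p^nℤ. Then |G| = p^{2n+1}; every irreducible complex representation of G has degree 1 or p; the number of isomorphism classes of irreducible complex representations of G of degree 1 is exactly p^{2n}; and the number of isomorphism classes of irreducible complex representations of G of degree p is exactly p^{2n-1} − p^{2n-2}. -/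
/-- The Heisenberg group over a commutative unital ring `S`: the underlying set is
`S × S × S` with multiplication `(x,y,z)·(x',y',z') = (x+x', y+y', z+xy'+z')`. -/
@[ext]
structure Heis (S : Type*) [CommRing S] where
  x : S
  y : S
  z : S

namespace Heis

variable {S : Type*} [CommRing S]

instance : Mul (Heis S) := ⟨fun a b => ⟨a.x + b.x, a.y + b.y, a.z + a.x * b.y + b.z⟩⟩
instance : One (Heis S) := ⟨⟨0, 0, 0⟩⟩
instance : Inv (Heis S) := ⟨fun a => ⟨-a.x, -a.y, a.x * a.y - a.z⟩⟩

@[simp] lemma mul_x (a b : Heis S) : (a * b).x = a.x + b.x := rfl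
@[simp] lemma mul_y (a b : Heis S) : (a * b).y = a.y + b.y := rfl
@[simp] lemma mul_z (a b : Heis S) : (a * b).z = a.z + a.x * b.y + b.z := rfl
@[simp] lemma one_x : (1 : Heis S).x = 0 := rfl
@[simp] lemma one_y : (1 : Heis S).y = 0 := rfl
@[simp] lemma one_z : (1 : Heis S).z = 0 := rfl
@[simp] lemma inv_x (a : Heis S) : a⁻¹.x = -a.x := rfl
@[simp] lemma inv_y (a : Heis S) : a⁻¹.y = -a.y := rfl
@[simp] lemma inv_z (a : Heis S) : a⁻¹.z = a.x * a.y - a.z := rfl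

instance : Group (Heis S) where
  mul_assoc a b c := by ext <;> simp <;> ring
  one_mul a := by ext <;> simp
  mul_one a := by ext <;> simp
  inv_mul_cancel a := by ext <;> simp <;> ring

end Heis

/-- The central subgroup `{(0,0,ps) : s ∈ S}` of the Heisenberg group `H(S)`. -/
def pCenter (p : ℕ) (S : Type*) [CommRing S] : Subgroup (Heis S) where
  carrier := {a | a.x = 0 ∧ a.y = 0 ∧ ∃ s : S, a.z = p * s}
  mul_mem' := by
    rintro a b ⟨hax, hay, s, hs⟩ ⟨hbx, hby, t, ht⟩
    refine ⟨by rw [Heis.mul_x, hax, hbx, add_zero],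
      by rw [Heis.mul_y, hay, hby, add_zero], s + t, ?_⟩
    rw [Heis.mul_z, hs, ht, hax]; ring
  one_mem' := ⟨rfl, rfl, 0, by simp⟩
  inv_mem' := by
    rintro a ⟨hax, hay, s, hs⟩
    exact ⟨by rw [Heis.inv_x, hax, neg_zero], by rw [Heis.inv_y, hay, neg_zero],
      -s, by rw [Heis.inv_z, hax, hs]; ring⟩

instance pCenter.normal (p : ℕ) (S : Type*) [CommRing S] : (pCenter p S).Normal := by
  constructor
  intro n hn g
  obtain ⟨hx, hy, hz⟩ := hn
  have hgn : g * n * g⁻¹ = n := by ext <;> simp [hx, hy] <;> ring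
  rw [hgn]; exact ⟨hx, hy, hz⟩

/-- The `p`-reduced Heisenberg group over `S`: the quotient of `H(S)` by the central
subgroup `{(0,0,ps) : s ∈ S}`. -/
abbrev HrP (p : ℕ) (S : Type*) [CommRing S] : Type _ := Heis S ⧸ pCenter p S

/-- The subgroup `{(0,0,s) : s ∈ S}` of `H(S)`. -/
def zSubgroup (S : Type*) [CommRing S] : Subgroup (Heis S) where
  carrier := {a | a.x = 0 ∧ a.y = 0}
  mul_mem' := by
    rintro a b ⟨hax, hay⟩ ⟨hbx, hby⟩
    exact ⟨by rw [Heis.mul_x, hax, hbx, add_zero], by rw [Heis.mul_y, hay, hby, add_zero]⟩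
  one_mem' := ⟨rfl, rfl⟩
  inv_mem' := by
    rintro a ⟨hax, hay⟩
    exact ⟨by rw [Heis.inv_x, hax, neg_zero], by rw [Heis.inv_y, hay, neg_zero]⟩

/-- The subgroup `K = {(0,0,[s]) : s ∈ S}` of the `p`-reduced Heisenberg group `Hr_p(S)`. -/
def Ksub (p : ℕ) (S : Type*) [CommRing S] : Subgroup (HrP p S) :=
  (zSubgroup S).map (QuotientGroup.mk' (pCenter p S))

instance Ksub.normal (p : ℕ) (S : Type*) [CommRing S] : (Ksub p S).Normal := by
  constructor
  intro n hn g
  obtain ⟨a, ⟨hax, hay⟩, rfl⟩ := hn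
  obtain ⟨b, rfl⟩ := QuotientGroup.mk'_surjective (pCenter p S) g
  refine ⟨b * a * b⁻¹, ⟨?_, ?_⟩, by simp⟩
  · simp [hax]
  · simp [hay]


namespace HrP

open Module

lemma pow_val_add {M : Type*} [Monoid M] {m : ℕ} [NeZero m] {a : M} (h : a ^ m = 1)
    (i j : ZMod m) : a ^ (i + j).val = a ^ i.val * a ^ j.val := by
  rw [ZMod.val_add, ← pow_eq_pow_mod _ h, pow_add]

lemma pow_val_mul {M : Type*} [Monoid M] {m : ℕ} [NeZero m] {a : M} (h : a ^ m = 1)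
    (i j : ZMod m) : a ^ (i * j).val = a ^ (i.val * j.val) := by
  rw [ZMod.val_mul, ← pow_eq_pow_mod _ h]

lemma pow_val_one {M : Type*} [Monoid M] {m : ℕ} {a : M} (h : a ^ m = 1) :
    a ^ (1 : ZMod m).val = a := by
  rw [ZMod.val_one_eq_one_mod, ← pow_eq_pow_mod _ h, pow_one]

lemma pow_mul_pow_of_mul_eq {M : Type*} [Monoid M] {x y z : M} (hxy : x * y = z * (y * x))
    (hzx : Commute z x) (hzy : Commute z y) (i j : ℕ) :
    x ^ i * y ^ j = z ^ (i * j) * (y ^ j * x ^ i) := by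
  have h1 : ∀ j, x * y ^ j = z ^ j * (y ^ j * x) := fun j ↦ by
    induction j with
    | zero => simp
    | succ j ih =>
      calc x * y ^ (j + 1) = (x * y ^ j) * y := by rw [pow_succ, mul_assoc]
        _ = z ^ j * y ^ j * (x * y) := by rw [ih]; simp only [mul_assoc]
        _ = z ^ j * (y ^ j * z) * y * x := by rw [hxy]; simp only [mul_assoc]
        _ = z ^ (j + 1) * (y ^ (j + 1) * x) := by
          rw [← (hzy.pow_right j).eq]; simp only [pow_succ, mul_assoc]
  induction i with
  | zero => simp
  | succ i ih =>
    calc x ^ (i + 1) * y ^ j = x ^ i * (x * y ^ j) := by rw [pow_succ, mul_assoc]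
      _ = (x ^ i * z ^ j) * y ^ j * x := by rw [h1]; simp only [mul_assoc]
      _ = z ^ j * (x ^ i * y ^ j) * x := by
        rw [← ((hzx.pow_left j).pow_right i).eq]; simp only [mul_assoc]
      _ = z ^ ((i + 1) * j) * (y ^ j * x ^ (i + 1)) := by
        rw [ih, add_mul, one_mul, add_comm, pow_add]; simp only [pow_succ, mul_assoc]

section Group

variable {p m : ℕ}

/-- The image in the reduced Heisenberg group of the element with given coordinates. -/
def mk (p : ℕ) {m : ℕ} (x y z : ZMod m) : HrP p (ZMod m) :=
  QuotientGroup.mk' (pCenter p (ZMod m)) ⟨x, y, z⟩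

lemma mk_mul_mk (x y z x' y' z' : ZMod m) :
    mk p x y z * mk p x' y' z' = mk p (x + x') (y + y') (z + x * y' + z') :=
  (map_mul (QuotientGroup.mk' (pCenter p (ZMod m))) ⟨x, y, z⟩ ⟨x', y', z'⟩).symm

lemma mk_zero : mk p (0 : ZMod m) 0 0 = 1 := rfl

lemma mk_eq_mk_iff {x y z x' y' z' : ZMod m} :
    mk p x y z = mk p x' y' z' ↔ x = x' ∧ y = y' ∧ ∃ s : ZMod m, z' - z = p * s := by
  have hmem (a : Heis (ZMod m)) :
      a ∈ pCenter p (ZMod m) ↔ a.x = 0 ∧ a.y = 0 ∧ ∃ s : ZMod m, a.z = p * s := Iff.rfl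
  refine QuotientGroup.eq.trans ?_
  simp only [hmem, Heis.mul_x, Heis.mul_y, Heis.mul_z, Heis.inv_x, Heis.inv_y, Heis.inv_z,
    neg_add_eq_zero]
  refine and_congr_right fun hx ↦ and_congr_right fun hy ↦ ?_
  subst hx hy
  rw [show x * y - z + -x * y + z' = z' - z by ring]

lemma mk_surjective (g : HrP p (ZMod m)) : ∃ x y z, g = mk p x y z := by
  obtain ⟨a, rfl⟩ := QuotientGroup.mk'_surjective _ g
  exact ⟨a.x, a.y, a.z, rfl⟩

lemma mk_x_pow (k : ℕ) : mk p (1 : ZMod m) 0 0 ^ k = mk p (k : ZMod m) 0 0 := by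
  induction k with
  | zero => simp [mk_zero]
  | succ k ih => simp [pow_succ, ih, mk_mul_mk]

lemma mk_y_pow (k : ℕ) : mk p (0 : ZMod m) 1 0 ^ k = mk p (0 : ZMod m) k 0 := by
  induction k with
  | zero => simp [mk_zero]
  | succ k ih => simp [pow_succ, ih, mk_mul_mk]

lemma mk_z_pow (k : ℕ) : mk p (0 : ZMod m) 0 1 ^ k = mk p (0 : ZMod m) 0 k := by
  induction k with
  | zero => simp [mk_zero]
  | succ k ih => simp [pow_succ, ih, mk_mul_mk]

lemma mk_z_pow_prime : mk p (0 : ZMod m) 0 1 ^ p = 1 := by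
  rw [mk_z_pow, ← mk_zero, mk_eq_mk_iff]
  exact ⟨rfl, rfl, -1, by simp⟩

lemma mk_eq_pow_mul [NeZero m] (x y z : ZMod m) :
    mk p x y z = mk p 0 1 0 ^ y.val * mk p 1 0 0 ^ x.val * mk p 0 0 1 ^ z.val := by
  simp [mk_x_pow, mk_y_pow, mk_z_pow, mk_mul_mk]

/-- The homomorphism out of the reduced Heisenberg group determined by elements satisfying the
defining relations. -/
noncomputable def lift {M : Type*} [Monoid M] [NeZero m] (hpm : p ∣ m) {X Y Z : M}
    (hX : X ^ m = 1) (hY : Y ^ m = 1)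
    (hZ : Z ^ p = 1) (hXY : X * Y = Z * (Y * X)) (hZX : Commute Z X) (hZY : Commute Z Y) :
    HrP p (ZMod m) →* M :=
  QuotientGroup.lift (pCenter p (ZMod m))
    { toFun := fun a ↦ Y ^ a.y.val * X ^ a.x.val * Z ^ a.z.val
      map_one' := by simp
      map_mul' := fun a b ↦ by
        have hZm : Z ^ m = 1 := by obtain ⟨k, rfl⟩ := hpm; rw [pow_mul, hZ, one_pow]
        simp only [Heis.mul_x, Heis.mul_y, Heis.mul_z, pow_val_add hX, pow_val_add hY,
          pow_val_add hZm, pow_val_mul hZm]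
        have h1 := pow_mul_pow_of_mul_eq hXY hZX hZY a.x.val b.y.val
        have hc (k i j : ℕ) : Commute (Z ^ k) (Y ^ i * X ^ j) :=
          (hZY.pow_pow k i).mul_right (hZX.pow_pow k j)
        have hc' (k i j : ℕ) (w : M) :
            Z ^ k * (Y ^ i * (X ^ j * w)) = Y ^ i * (X ^ j * (Z ^ k * w)) := by
          simpa only [mul_assoc] using congrArg (· * w) (hc k i j).eq
        calc Y ^ a.y.val * Y ^ b.y.val * (X ^ a.x.val * X ^ b.x.val) *
              (Z ^ a.z.val * Z ^ (a.x.val * b.y.val) * Z ^ b.z.val)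
            = Y ^ a.y.val * (Z ^ (a.x.val * b.y.val) * (Y ^ b.y.val * X ^ a.x.val)) *
              (X ^ b.x.val * (Z ^ a.z.val * Z ^ b.z.val)) := by
              rw [((Commute.refl Z).pow_pow a.z.val (a.x.val * b.y.val)).eq]
              have h3 := (hZX.pow_pow (a.x.val * b.y.val) b.x.val).eq
              rw [(hc _ _ _).eq]
              simp only [mul_assoc]
              rw [← mul_assoc (Z ^ _) (X ^ _), h3]
              simp only [mul_assoc]
          _ = _ := by
              rw [← h1]
              simp only [mul_assoc]
              rw [hc'] }
    (by
      rintro a ⟨hx, hy, s, hs⟩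
      have hZm : Z ^ m = 1 := by obtain ⟨k, rfl⟩ := hpm; rw [pow_mul, hZ, one_pow]
      simp only [MonoidHom.mem_ker, MonoidHom.coe_mk, OneHom.coe_mk, hx, hy, hs,
        pow_val_mul hZm, ZMod.val_zero, pow_zero, one_mul, ZMod.val_natCast]
      rw [pow_mul, ← pow_eq_pow_mod _ hZm, hZ, one_pow])

lemma card_eq [NeZero m] (hp : p ≠ 0) (hpm : p ∣ m) : Nat.card (HrP p (ZMod m)) = m ^ 2 * p := by
  have : NeZero p := ⟨hp⟩
  let f : ZMod m × ZMod m × ZMod p → HrP p (ZMod m) := fun t ↦ mk p t.1 t.2.1 t.2.2.val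
  have hf : Function.Bijective f := by
    constructor
    · rintro ⟨x, y, z⟩ ⟨x', y', z'⟩ h
      obtain ⟨rfl, rfl, s, hs⟩ := mk_eq_mk_iff.1 h
      have h2 := congrArg (ZMod.castHom hpm (ZMod p)) hs
      simp only [map_sub, map_natCast, map_mul, ZMod.natCast_zmod_val,
        CharP.cast_eq_zero, zero_mul, sub_eq_zero] at h2
      simp [h2]
    · intro g
      obtain ⟨x, y, z, rfl⟩ := mk_surjective g
      refine ⟨(x, y, (z.val : ZMod p)), mk_eq_mk_iff.2 ⟨rfl, rfl, (z.val / p : ℕ), ?_⟩⟩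
      rw [ZMod.val_natCast, sub_eq_iff_eq_add]
      norm_cast
      rw [Nat.div_add_mod]
      simp
  rw [← Nat.card_eq_of_bijective f hf]
  simp [sq, mul_assoc]

end Group

section Modules

variable {p m : ℕ} {V : Type*} [AddCommGroup V] [Module (MonoidAlgebra ℂ (HrP p (ZMod m))) V]
  [Module ℂ V] [IsScalarTower ℂ (MonoidAlgebra ℂ (HrP p (ZMod m))) V]
  {W : Type*} [AddCommGroup W] [Module (MonoidAlgebra ℂ (HrP p (ZMod m))) W] [Module ℂ W]
  [IsScalarTower ℂ (MonoidAlgebra ℂ (HrP p (ZMod m))) W]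

variable (p m V) in
/-- The operator by which the group element with given coordinates acts on a module. -/
noncomputable def op (x y z : ZMod m) : Module.End ℂ V :=
  Representation.ofModule' (k := ℂ) (G := HrP p (ZMod m)) V (mk p x y z)

lemma op_apply (x y z : ZMod m) (v : V) :
    op p m V x y z v = MonoidAlgebra.single (mk p x y z) (1 : ℂ) • v := rfl

lemma op_eq_pow_mul [NeZero m] (x y z : ZMod m) : op p m V x y z =
    op p m V 0 1 0 ^ y.val * op p m V 1 0 0 ^ x.val * op p m V 0 0 1 ^ z.val := by
  simp only [op, ← map_pow, ← map_mul]
  rw [mk_eq_pow_mul]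

lemma op_mul_op (x y z x' y' z' : ZMod m) : op p m V x y z * op p m V x' y' z' =
    op p m V (x + x') (y + y') (z + x * y' + z') := by
  simp only [op, ← map_mul, mk_mul_mk]

lemma op_x_pow : op p m V (1 : ZMod m) 0 0 ^ m = 1 := by
  simp [op, ← map_pow, mk_x_pow, mk_zero]

lemma op_y_pow : op p m V (0 : ZMod m) 1 0 ^ m = 1 := by
  simp [op, ← map_pow, mk_y_pow, mk_zero]

lemma op_z_pow : op p m V (0 : ZMod m) 0 1 ^ p = 1 := by
  rw [op, ← map_pow, mk_z_pow_prime, map_one]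

lemma op_x_mul_op_y : op p m V (1 : ZMod m) 0 0 * op p m V 0 1 0 =
    op p m V 0 0 1 * (op p m V 0 1 0 * op p m V 1 0 0) := by
  simp [op_mul_op]

lemma commute_op_z (x y z : ZMod m) : Commute (op p m V 0 0 1) (op p m V x y z) := by
  simp [Commute, SemiconjBy, op_mul_op, add_comm]

/-- A linear map commuting with the actions of the three generators is a module map. -/
lemma exists_linearMap [NeZero m] (f : V →ₗ[ℂ] W)
    (hx : ∀ v, f (op p m V 1 0 0 v) = op p m W 1 0 0 (f v))
    (hy : ∀ v, f (op p m V 0 1 0 v) = op p m W 0 1 0 (f v))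
    (hz : ∀ v, f (op p m V 0 0 1 v) = op p m W 0 0 1 (f v)) :
    ∃ F : V →ₗ[MonoidAlgebra ℂ (HrP p (ZMod m))] W, ∀ v, F v = f v := by
  have hpow {S : Module.End ℂ V} {T : Module.End ℂ W} (h : ∀ v, f (S v) = T (f v)) (k : ℕ) (v : V) :
      f ((S ^ k) v) = (T ^ k) (f v) := by
    induction k with
    | zero => simp
    | succ k ih => simp only [pow_succ', Module.End.mul_apply, h, ih]
  refine ⟨MonoidAlgebra.equivariantOfLinearOfComm f fun g v ↦ ?_, fun v ↦ rfl⟩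
  obtain ⟨x, y, z, rfl⟩ := mk_surjective g
  rw [← op_apply, ← op_apply, op_eq_pow_mul, op_eq_pow_mul (V := W)]
  simp only [Module.End.mul_apply, hpow hx, hpow hy, hpow hz]

lemma map_op (F : V →ₗ[MonoidAlgebra ℂ (HrP p (ZMod m))] W) (x y z : ZMod m) (v : V) :
    F (op p m V x y z v) = op p m W x y z (F v) := by
  simp [op_apply]

lemma map_op_pow (F : V →ₗ[MonoidAlgebra ℂ (HrP p (ZMod m))] W) (x y z : ZMod m) (k : ℕ) (v : V) :
    F ((op p m V x y z ^ k) v) = (op p m W x y z ^ k) (F v) := by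
  induction k with
  | zero => simp
  | succ k ih => simp only [pow_succ', Module.End.mul_apply, map_op, ih]

/-- An operator on a simple module commuting with the generators is a scalar. -/
lemma exists_eq_smul [NeZero m] [IsSimpleModule (MonoidAlgebra ℂ (HrP p (ZMod m))) V]
    [FiniteDimensional ℂ V] (T : Module.End ℂ V) (hx : Commute T (op p m V 1 0 0))
    (hy : Commute T (op p m V 0 1 0)) (hz : Commute T (op p m V 0 0 1)) :
    ∃ c : ℂ, ∀ v, T v = c • v := by
  obtain ⟨F, hF⟩ := exists_linearMap (p := p) (m := m) T (fun v ↦ LinearMap.congr_fun hx.eq v)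
    (fun v ↦ LinearMap.congr_fun hy.eq v) (fun v ↦ LinearMap.congr_fun hz.eq v)
  obtain ⟨c, hc⟩ := (IsSimpleModule.algebraMap_end_bijective_of_isAlgClosed ℂ
    (A := MonoidAlgebra ℂ (HrP p (ZMod m))) (V := V)).2 F
  exact ⟨c, fun v ↦ by rw [← hF, ← hc]; rfl⟩

lemma pow_apply_of_apply_eq_smul {T : Module.End ℂ V} {c : ℂ} {v : V} (h : T v = c • v) (k : ℕ) :
    (T ^ k) v = c ^ k • v := by
  induction k with
  | zero => simp
  | succ k ih => rw [pow_succ', Module.End.mul_apply, ih, map_smul, h, smul_smul, pow_succ]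

end Modules

/-- The conditions on the parameters of a clock-and-shift representation of degree `q`. -/
structure IsAdmissible (p m q : ℕ) (ζ a l : ℂ) : Prop where
  dvd_left : q ∣ p
  dvd_right : p ∣ m
  isPrimitiveRoot : IsPrimitiveRoot ζ q
  pow_a : a ^ m = 1
  pow_l : l ^ m = 1

/-- The scaled cyclic shift `f ↦ (i ↦ a * f (i + 1))`. -/
noncomputable def shift (q : ℕ) (a : ℂ) : Module.End ℂ (ZMod q → ℂ) :=
  a • LinearMap.funLeft ℂ ℂ (· + 1)

/-- The diagonal operator `f ↦ (i ↦ l * ζ ^ i * f i)`. -/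
noncomputable def clock (q : ℕ) (ζ l : ℂ) : Module.End ℂ (ZMod q → ℂ) :=
  LinearMap.mulLeft ℂ fun i ↦ l * ζ ^ i.val

section Operators

variable {q : ℕ} {ζ a l : ℂ}

lemma shift_apply (f : ZMod q → ℂ) (i : ZMod q) : shift q a f i = a * f (i + 1) := rfl

lemma clock_apply (f : ZMod q → ℂ) (i : ZMod q) : clock q ζ l f i = l * ζ ^ i.val * f i := rfl

lemma shift_pow_apply (k : ℕ) (f : ZMod q → ℂ) (i : ZMod q) :
    (shift q a ^ k) f i = a ^ k * f (i + k) := by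
  induction k generalizing i with
  | zero => simp
  | succ k ih =>
    rw [pow_succ', Module.End.mul_apply, shift_apply, ih]
    push_cast
    rw [pow_succ', mul_assoc, add_assoc, add_comm 1 (k : ZMod q)]

lemma clock_pow_apply (k : ℕ) (f : ZMod q → ℂ) (i : ZMod q) :
    (clock q ζ l ^ k) f i = (l * ζ ^ i.val) ^ k * f i := by
  induction k with
  | zero => simp
  | succ k ih => rw [pow_succ', Module.End.mul_apply, clock_apply, ih, pow_succ', mul_assoc _ (_ ^ k)]

lemma shift_mul_clock [NeZero q] (hζ : ζ ^ q = 1) :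
    shift q a * clock q ζ l = (ζ • 1) * (clock q ζ l * shift q a) := by
  refine LinearMap.ext fun f ↦ funext fun i ↦ ?_
  simp only [Module.End.mul_apply, LinearMap.smul_apply, Pi.smul_apply, Module.End.one_apply,
    shift_apply, clock_apply, smul_eq_mul, pow_val_add hζ, pow_val_one hζ]
  ring

end Operators

section ClockShift

variable {p m q : ℕ} {ζ a l : ℂ}

lemma IsAdmissible.pow_zeta (h : IsAdmissible p m q ζ a l) : ζ ^ m = 1 :=
  (h.isPrimitiveRoot.pow_eq_one_iff_dvd m).2 (h.dvd_left.trans h.dvd_right)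

lemma shift_pow_eq_one (h : IsAdmissible p m q ζ a l) : shift q a ^ m = 1 := by
  obtain ⟨k, hk⟩ := h.dvd_left.trans h.dvd_right
  refine LinearMap.ext fun f ↦ funext fun i ↦ ?_
  have : (m : ZMod q) = 0 := by simp [hk]
  simp [shift_pow_apply, h.pow_a, this]

lemma clock_pow_eq_one (h : IsAdmissible p m q ζ a l) : clock q ζ l ^ m = 1 := by
  refine LinearMap.ext fun f ↦ funext fun i ↦ ?_
  rw [clock_pow_apply, mul_pow, h.pow_l, ← pow_mul, mul_comm i.val, pow_mul, h.pow_zeta]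
  simp

lemma IsAdmissible.a_ne_zero [NeZero m] (h : IsAdmissible p m q ζ a l) : a ≠ 0 := by
  rintro rfl
  simpa [NeZero.ne m] using h.pow_a

lemma IsAdmissible.l_ne_zero [NeZero m] (h : IsAdmissible p m q ζ a l) : l ≠ 0 := by
  rintro rfl
  simpa [NeZero.ne m] using h.pow_l

variable [NeZero m] [NeZero q]

/-- The representation of degree `q` in which the generators act by shift, clock and scalar
operators. -/
noncomputable def clockShift (h : IsAdmissible p m q ζ a l) :
    Representation ℂ (HrP p (ZMod m)) (ZMod q → ℂ) :=
  lift h.dvd_right (X := shift q a) (Y := clock q ζ l) (Z := ζ • 1)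
    (shift_pow_eq_one h) (clock_pow_eq_one h)
    (by
      rw [smul_pow, one_pow, (h.isPrimitiveRoot.pow_eq_one_iff_dvd p).2 h.dvd_left, one_smul])
    (shift_mul_clock h.isPrimitiveRoot.pow_eq_one)
    ((Commute.one_left _).smul_left ζ) ((Commute.one_left _).smul_left ζ)

variable (h : IsAdmissible p m q ζ a l)

lemma asModuleEquiv_op (x y z : ZMod m) (v : (clockShift h).asModule) :
    (clockShift h).asModuleEquiv (op p m _ x y z v) =
      (clock q ζ l ^ y.val * shift q a ^ x.val * (ζ • 1) ^ z.val)
        ((clockShift h).asModuleEquiv v) := by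
  rw [op_apply, Representation.asModuleEquiv_map_smul, Representation.asAlgebraHom_single,
    one_smul]
  rfl

lemma asModuleEquiv_op_x (v : (clockShift h).asModule) :
    (clockShift h).asModuleEquiv (op p m _ 1 0 0 v) =
      shift q a ((clockShift h).asModuleEquiv v) := by
  rw [asModuleEquiv_op, pow_val_one (shift_pow_eq_one h)]
  simp

lemma asModuleEquiv_op_y (v : (clockShift h).asModule) :
    (clockShift h).asModuleEquiv (op p m _ 0 1 0 v) =
      clock q ζ l ((clockShift h).asModuleEquiv v) := by
  rw [asModuleEquiv_op, pow_val_one (clock_pow_eq_one h)]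
  simp

lemma op_z_clockShift (v : (clockShift h).asModule) :
    op p m (clockShift h).asModule 0 0 1 v = ζ • v := by
  refine (clockShift h).asModuleEquiv.injective ?_
  rw [asModuleEquiv_op, pow_val_one (by rw [smul_pow, h.pow_zeta, one_smul, one_pow])]
  simp

lemma asModuleEquiv_op_x_pow (k : ℕ) (v : (clockShift h).asModule) :
    (clockShift h).asModuleEquiv ((op p m _ 1 0 0 ^ k) v) =
      (shift q a ^ k) ((clockShift h).asModuleEquiv v) := by
  induction k with
  | zero => simp
  | succ k ih => simp only [pow_succ', Module.End.mul_apply, asModuleEquiv_op_x, ih]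

lemma asModuleEquiv_op_y_pow (k : ℕ) (v : (clockShift h).asModule) :
    (clockShift h).asModuleEquiv ((op p m _ 0 1 0 ^ k) v) =
      (clock q ζ l ^ k) ((clockShift h).asModuleEquiv v) := by
  induction k with
  | zero => simp
  | succ k ih => simp only [pow_succ', Module.End.mul_apply, asModuleEquiv_op_y, ih]

lemma op_x_pow_clockShift (v : (clockShift h).asModule) :
    (op p m (clockShift h).asModule 1 0 0 ^ q) v = a ^ q • v := by
  refine (clockShift h).asModuleEquiv.injective ?_
  rw [asModuleEquiv_op_x_pow]
  funext i
  simp [shift_pow_apply]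

lemma op_y_pow_clockShift (v : (clockShift h).asModule) :
    (op p m (clockShift h).asModule 0 1 0 ^ q) v = l ^ q • v := by
  refine (clockShift h).asModuleEquiv.injective ?_
  rw [asModuleEquiv_op_y_pow]
  funext i
  rw [clock_pow_apply, mul_pow, pow_right_comm, h.isPrimitiveRoot.pow_eq_one]
  simp

lemma finrank_clockShift : finrank ℂ (clockShift h).asModule = q := by
  rw [(clockShift h).asModuleEquiv.finrank_eq]
  simp [ZMod.card]

instance : Nontrivial (clockShift h).asModule :=
  (clockShift h).asModuleEquiv.toEquiv.nontrivial

lemma op_mem (N : Submodule (MonoidAlgebra ℂ (HrP p (ZMod m))) (clockShift h).asModule)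
    (x y z : ZMod m) {v} (hv : v ∈ N) : op p m _ x y z v ∈ N := N.smul_mem _ hv

instance isSimpleModule_clockShift :
    IsSimpleModule (MonoidAlgebra ℂ (HrP p (ZMod m))) (clockShift h).asModule := by
  rw [isSimpleModule_iff]
  refine { eq_bot_or_eq_top := fun N ↦ or_iff_not_imp_left.2 fun hN ↦ ?_ }
  set e := (clockShift h).asModuleEquiv with he
  let N' : Submodule ℂ (clockShift h).asModule := N.restrictScalars ℂ
  have : Nontrivial N' := (Submodule.nontrivial_iff_ne_bot (p := N)).2 hN
  have hmem (x y z : ZMod m) : ∀ v ∈ N', op p m _ x y z v ∈ N' := fun v hv ↦ op_mem h N x y z hv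
  obtain ⟨μ, hμ⟩ := Module.End.exists_eigenvalue ((op p m _ 0 1 0).restrict (hmem 0 1 0))
  obtain ⟨⟨w, hwN⟩, hw⟩ := hμ.exists_hasEigenvector
  have hw0 : w ≠ 0 := fun h0 ↦ hw.2 (Subtype.ext h0)
  have hw1 : op p m _ 0 1 0 w = μ • w := congrArg Subtype.val hw.apply_eq_smul
  have hcoord (i : ZMod q) : l * ζ ^ i.val * e w i = μ * e w i := by
    simpa [he, asModuleEquiv_op_y, clock_apply] using congrArg (fun v ↦ e v i) hw1
  obtain ⟨i, hi⟩ : ∃ i, e w i ≠ 0 := by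
    by_contra! hcon
    exact hw0 (e.injective ((funext hcon).trans (map_zero e).symm))
  have hother (j : ZMod q) (hj : j ≠ i) : e w j = 0 := by
    by_contra hj0
    have h1 := (mul_right_cancel₀ hj0 (hcoord j)).trans (mul_right_cancel₀ hi (hcoord i)).symm
    exact hj (ZMod.val_injective q (h.isPrimitiveRoot.pow_inj (ZMod.val_lt j) (ZMod.val_lt i)
      (mul_left_cancel₀ h.l_ne_zero h1)))
  have hshift (k : ℕ) : (op p m _ 1 0 0 ^ k) w ∈ N' := by
    induction k with
    | zero => exact hwN
    | succ k ih => rw [pow_succ', Module.End.mul_apply]; exact hmem 1 0 0 _ ih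
  have hsingle (j : ZMod q) : e.symm (Pi.single j 1) ∈ N' := by
    have h2 : (op p m _ 1 0 0 ^ (i - j).val) w =
        (a ^ (i - j).val * e w i) • e.symm (Pi.single j 1) := by
      refine e.injective ?_
      rw [asModuleEquiv_op_x_pow]
      funext k
      rw [shift_pow_apply, map_smul, LinearEquiv.apply_symm_apply, ZMod.natCast_zmod_val]
      by_cases hk : k = j
      · subst hk
        simp [he]
      · rw [← he, hother _ (by rwa [ne_eq, ← eq_sub_iff_add_eq, sub_sub_cancel])]
        simp [hk]
    exact (N'.smul_mem_iff (mul_ne_zero (pow_ne_zero _ h.a_ne_zero) hi)).1 (h2 ▸ hshift _)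
  refine eq_top_iff.2 fun v _ ↦ ?_
  have hv : v = ∑ j, e v j • e.symm (Pi.single j 1) := by
    refine e.injective ?_
    simp only [map_sum, map_smul, LinearEquiv.apply_symm_apply]
    exact pi_eq_sum_univ' (e v)
  rw [hv]
  exact N'.sum_mem fun j _ ↦ N'.smul_mem _ (hsingle j)

section Hom

variable {V : Type*} [AddCommGroup V] [Module (MonoidAlgebra ℂ (HrP p (ZMod m))) V] [Module ℂ V]
  [IsScalarTower ℂ (MonoidAlgebra ℂ (HrP p (ZMod m))) V]

/-- An eigenvector generates an image of a clock-and-shift module. -/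
lemma exists_linearMap_clockShift {v : V} (hx : ∀ v, (op p m V 1 0 0 ^ q) v = a ^ q • v)
    (hy : op p m V 0 1 0 v = l • v) (hz : ∀ v, op p m V 0 0 1 v = ζ • v) :
    ∃ F : (clockShift h).asModule →ₗ[MonoidAlgebra ℂ (HrP p (ZMod m))] V,
      F ((clockShift h).asModuleEquiv.symm (Pi.single 0 1)) = v := by
  set e := (clockShift h).asModuleEquiv with he
  have hζ := h.isPrimitiveRoot.pow_eq_one
  have ha := h.a_ne_zero
  let T : Module.End ℂ V := a⁻¹ • op p m V 1 0 0
  have hT : T ^ q = 1 := by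
    refine LinearMap.ext fun u ↦ ?_
    rw [smul_pow, LinearMap.smul_apply, hx, smul_smul, ← mul_pow, inv_mul_cancel₀ ha]
    simp
  have hXT (u : V) : op p m V 1 0 0 u = a • T u := by
    rw [LinearMap.smul_apply, smul_smul, mul_inv_cancel₀ ha, one_smul]
  have hZ : op p m V 0 0 1 = ζ • 1 := LinearMap.ext hz
  have hTY : T * op p m V 0 1 0 = (ζ • 1) * (op p m V 0 1 0 * T) := by
    rw [smul_mul_assoc, op_x_mul_op_y, hZ, mul_smul_comm, mul_smul_comm]
  have hTYk (k : ℕ) : l • (T ^ k) v = ζ ^ k • op p m V 0 1 0 ((T ^ k) v) := by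
    have h1 := pow_mul_pow_of_mul_eq hTY ((Commute.one_left _).smul_left ζ)
      ((Commute.one_left _).smul_left ζ) k 1
    rw [pow_one, mul_one, smul_pow ζ, one_pow] at h1
    simpa [hy] using LinearMap.congr_fun h1 v
  let w : ZMod q → V := fun i ↦ (T ^ (-i).val) v
  have hwx (i : ZMod q) : op p m V 1 0 0 (w i) = a • w (i - 1) := by
    rw [hXT]
    change a • (T * T ^ (-i).val) v = a • (T ^ (-(i - 1)).val) v
    rw [neg_sub, sub_eq_add_neg, pow_val_add hT, pow_val_one hT]
  have hwy (i : ZMod q) : op p m V 0 1 0 (w i) = (l * ζ ^ i.val) • w i := by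
    have h1 : ζ ^ i.val * ζ ^ (-i).val = 1 := by
      rw [← pow_val_add hζ, add_neg_cancel, ZMod.val_zero, pow_zero]
    change op p m V 0 1 0 ((T ^ (-i).val) v) = (l * ζ ^ i.val) • (T ^ (-i).val) v
    rw [mul_comm, mul_smul, hTYk, smul_smul, h1, one_smul]
  obtain ⟨F, hF⟩ := exists_linearMap (p := p) (m := m)
    (Fintype.linearCombination ℂ w ∘ₗ e.toLinearMap)
    (fun f ↦ by
      simp only [LinearMap.comp_apply, LinearEquiv.coe_coe, he, asModuleEquiv_op_x,
        Fintype.linearCombination_apply, shift_apply, map_sum, map_smul, hwx]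
      refine Fintype.sum_equiv (Equiv.addRight 1) _ _ fun i ↦ ?_
      simp [smul_smul, mul_comm])
    (fun f ↦ by
      simp only [LinearMap.comp_apply, LinearEquiv.coe_coe, he, asModuleEquiv_op_y,
        Fintype.linearCombination_apply, clock_apply, map_sum, map_smul, hwy]
      exact Finset.sum_congr rfl fun i _ ↦ by rw [smul_smul, mul_comm])
    (fun f ↦ by rw [op_z_clockShift, map_smul, hz])
  refine ⟨F, ?_⟩
  rw [hF, LinearMap.comp_apply, LinearEquiv.coe_coe, LinearEquiv.apply_symm_apply]
  simp [w]

lemma nonempty_clockShift_equiv [IsSimpleModule (MonoidAlgebra ℂ (HrP p (ZMod m))) V] {v : V}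
    (hv : v ≠ 0) (hx : ∀ v, (op p m V 1 0 0 ^ q) v = a ^ q • v)
    (hy : op p m V 0 1 0 v = l • v) (hz : ∀ v, op p m V 0 0 1 v = ζ • v) :
    Nonempty ((clockShift h).asModule ≃ₗ[MonoidAlgebra ℂ (HrP p (ZMod m))] V) := by
  obtain ⟨F, hF⟩ := exists_linearMap_clockShift h hx hy hz
  have hF0 : F ≠ 0 := by
    rintro rfl
    exact hv hF.symm
  exact ⟨LinearEquiv.ofBijective F (LinearMap.bijective_of_ne_zero hF0)⟩

end Hom

variable {ζ' a' l' : ℂ}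

lemma params_eq_of_equiv (h : IsAdmissible p m q ζ a l) (h' : IsAdmissible p m q ζ' a' l')
    (e : (clockShift h).asModule ≃ₗ[MonoidAlgebra ℂ (HrP p (ZMod m))] (clockShift h').asModule) :
    ζ = ζ' ∧ a ^ q = a' ^ q ∧ l ^ q = l' ^ q := by
  obtain ⟨v, hv⟩ := exists_ne (0 : (clockShift h).asModule)
  have hev : e v ≠ 0 := (map_ne_zero_iff e e.injective).2 hv
  have hsmul (c : ℂ) : e (c • v) = c • e v := (e.toLinearMap.restrictScalars ℂ).map_smul c v
  refine ⟨smul_left_injective ℂ hev ?_, smul_left_injective ℂ hev ?_,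
    smul_left_injective ℂ hev ?_⟩
  · simpa only [op_z_clockShift, hsmul, LinearEquiv.coe_coe] using
      map_op e.toLinearMap 0 0 1 v
  · simpa only [op_x_pow_clockShift, hsmul, LinearEquiv.coe_coe] using
      map_op_pow e.toLinearMap 1 0 0 q v
  · simpa only [op_y_pow_clockShift, hsmul, LinearEquiv.coe_coe] using
      map_op_pow e.toLinearMap 0 1 0 q v

lemma equiv_of_params_eq (h : IsAdmissible p m q ζ a l) (h' : IsAdmissible p m q ζ a' l')
    (ha : a ^ q = a' ^ q) (hl : l ^ q = l' ^ q) :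
    Nonempty ((clockShift h').asModule ≃ₗ[MonoidAlgebra ℂ (HrP p (ZMod m))]
      (clockShift h).asModule) := by
  have hl0 := h.l_ne_zero
  obtain ⟨k, hk, hk'⟩ := h.isPrimitiveRoot.eq_pow_of_pow_eq_one
    (show (l' / l) ^ q = 1 by rw [div_pow, ← hl, div_self (pow_ne_zero _ hl0)])
  refine nonempty_clockShift_equiv h'
    (v := (clockShift h).asModuleEquiv.symm (Pi.single (k : ZMod q) 1)) ?_ ?_ ?_ ?_
  · rw [ne_eq, LinearEquiv.map_eq_zero_iff]
    simp
  · exact fun v ↦ by rw [op_x_pow_clockShift, ha]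
  · refine (clockShift h).asModuleEquiv.injective ?_
    rw [asModuleEquiv_op_y, map_smul, LinearEquiv.apply_symm_apply]
    funext i
    rw [clock_apply, Pi.smul_apply, smul_eq_mul]
    by_cases hi : i = k
    · rw [hi, ZMod.val_cast_of_lt hk, hk', mul_div_cancel₀ _ hl0]
    · simp [hi]
  · exact op_z_clockShift h

end ClockShift

section Classification

variable {p m : ℕ} [NeZero m]

/-- Every irreducible representation is a clock-and-shift representation. -/
lemma exists_clockShift_equiv (hp : p ≠ 0) (hpm : p ∣ m)
    (V : Type*) [AddCommGroup V] [Module (MonoidAlgebra ℂ (HrP p (ZMod m))) V] [Module ℂ V]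
    [IsScalarTower ℂ (MonoidAlgebra ℂ (HrP p (ZMod m))) V]
    [IsSimpleModule (MonoidAlgebra ℂ (HrP p (ZMod m))) V] [FiniteDimensional ℂ V] :
    ∃ (q : ℕ) (_ : NeZero q) (ζ a l : ℂ) (h : IsAdmissible p m q ζ a l),
      Nonempty ((clockShift h).asModule ≃ₗ[MonoidAlgebra ℂ (HrP p (ZMod m))] V) := by
  have : Nontrivial V := IsSimpleModule.nontrivial (MonoidAlgebra ℂ (HrP p (ZMod m))) V
  obtain ⟨ζ, hz⟩ := exists_eq_smul (op p m V 0 0 1) (commute_op_z 1 0 0) (commute_op_z 0 1 0)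
    (commute_op_z 0 0 1)
  have hζp : ζ ^ p = 1 := by
    obtain ⟨v, hv⟩ := exists_ne (0 : V)
    refine smul_left_injective ℂ hv ?_
    simpa [op_z_pow] using (pow_apply_of_apply_eq_smul (hz v) p).symm
  have hqp : orderOf ζ ∣ p := orderOf_dvd_of_pow_eq_one hζp
  obtain ⟨d, hd⟩ := hqp.trans hpm
  have hq : NeZero (orderOf ζ) := ⟨fun h0 ↦ hp (by simpa [h0] using hqp)⟩
  have hZ : op p m V 0 0 1 = ζ • 1 := LinearMap.ext hz
  have hcomm : Commute (op p m V 1 0 0 ^ orderOf ζ) (op p m V 0 1 0) := by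
    have h1 := pow_mul_pow_of_mul_eq (op_x_mul_op_y (V := V) (p := p) (m := m))
      (commute_op_z 1 0 0) (commute_op_z 0 1 0) (orderOf ζ) 1
    rw [hZ, mul_one, smul_pow, pow_orderOf_eq_one, one_pow, one_smul, one_mul, pow_one] at h1
    exact h1
  obtain ⟨α, hα⟩ := exists_eq_smul (op p m V 1 0 0 ^ orderOf ζ)
    ((Commute.refl _).pow_left _) hcomm ((commute_op_z 1 0 0).symm.pow_left _)
  obtain ⟨a, rfl⟩ := IsAlgClosed.exists_pow_nat_eq α (NeZero.pos (orderOf ζ))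
  obtain ⟨l, hl⟩ := Module.End.exists_eigenvalue (op p m V 0 1 0)
  obtain ⟨v, hv⟩ := hl.exists_hasEigenvector
  have h : IsAdmissible p m (orderOf ζ) ζ a l :=
    { dvd_left := hqp
      dvd_right := hpm
      isPrimitiveRoot := IsPrimitiveRoot.orderOf ζ
      pow_a := smul_left_injective ℂ hv.2 <| by
        have h1 := pow_apply_of_apply_eq_smul (hα v) d
        rw [← pow_mul, ← hd, op_x_pow, ← pow_mul, ← hd] at h1
        simpa using h1.symm
      pow_l := smul_left_injective ℂ hv.2 <| by
        simpa [op_y_pow] using (pow_apply_of_apply_eq_smul hv.apply_eq_smul m).symm }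
  exact ⟨orderOf ζ, hq, ζ, a, l, h, nonempty_clockShift_equiv h hv.2 hα hv.apply_eq_smul hz⟩

variable {ι : Type*} (V : ι → Type*) [∀ i, AddCommGroup (V i)]
  [∀ i, Module (MonoidAlgebra ℂ (HrP p (ZMod m))) (V i)] [∀ i, Module ℂ (V i)]
  [∀ i, IsScalarTower ℂ (MonoidAlgebra ℂ (HrP p (ZMod m))) (V i)]

/-- The number of irreducible representations of degree `q`, in a complete family. -/
lemma card_finrank_eq (hp : p ≠ 0) (hpm : p ∣ m)
    (hsimple : ∀ i, IsSimpleModule (MonoidAlgebra ℂ (HrP p (ZMod m))) (V i))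
    (hfd : ∀ i, FiniteDimensional ℂ (V i))
    (hpairwise : ∀ i j : ι,
      Nonempty (V i ≃ₗ[MonoidAlgebra ℂ (HrP p (ZMod m))] V j) → i = j)
    (hcomplete : ∀ (W : Type) [AddCommGroup W]
      [Module (MonoidAlgebra ℂ (HrP p (ZMod m))) W]
      [Module ℂ W] [IsScalarTower ℂ (MonoidAlgebra ℂ (HrP p (ZMod m))) W],
      IsSimpleModule (MonoidAlgebra ℂ (HrP p (ZMod m))) W → FiniteDimensional ℂ W →
        ∃ i : ι, Nonempty (W ≃ₗ[MonoidAlgebra ℂ (HrP p (ZMod m))] V i))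
    {q d : ℕ} (hq : q ∣ p) (hd : m = q * d) :
    Nat.card {i : ι // finrank ℂ (V i) = q} = q.totient * d ^ 2 := by
  have hq0 : NeZero q := ⟨fun h0 ↦ hp (by simpa [h0] using hq)⟩
  have hd0 : NeZero d := ⟨fun h0 ↦ NeZero.ne m (by rw [hd, h0, mul_zero])⟩
  choose r hr using fun α : ℂ ↦ IsAlgClosed.exists_pow_nat_eq α (NeZero.pos q)
  have hrm {α : ℂ} (hα : α ^ d = 1) : r α ^ m = 1 := by rw [hd, pow_mul, hr, hα]
  have hadm (t : primitiveRoots q ℂ × Polynomial.nthRootsFinset d (1 : ℂ) ×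
      Polynomial.nthRootsFinset d (1 : ℂ)) :
      IsAdmissible p m q t.1 (r t.2.1) (r t.2.2) :=
    ⟨hq, hpm, isPrimitiveRoot_of_mem_primitiveRoots t.1.2,
      hrm ((Polynomial.mem_nthRootsFinset (NeZero.pos d) 1).1 t.2.1.2),
      hrm ((Polynomial.mem_nthRootsFinset (NeZero.pos d) 1).1 t.2.2.2)⟩
  choose f hf using fun t ↦ hcomplete (clockShift (hadm t)).asModule inferInstance inferInstance
  have hrank {q : ℕ} [NeZero q] {ζ a l : ℂ} (h : IsAdmissible p m q ζ a l) {i : ι}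
      (e : (clockShift h).asModule ≃ₗ[MonoidAlgebra ℂ (HrP p (ZMod m))] V i) :
      finrank ℂ (V i) = q := by
    rw [← (e.restrictScalars ℂ).finrank_eq, finrank_clockShift]
  let F (t : primitiveRoots q ℂ × Polynomial.nthRootsFinset d (1 : ℂ) ×
      Polynomial.nthRootsFinset d (1 : ℂ)) : {i : ι // finrank ℂ (V i) = q} :=
    ⟨f t, hrank (hadm t) (hf t).some⟩
  have hF : Function.Bijective F := by
    constructor
    · intro t t' htt
      have hff : f t = f t' := congrArg Subtype.val htt
      obtain ⟨e⟩ := hf t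
      obtain ⟨e'⟩ := hff ▸ hf t'
      obtain ⟨h1, h2, h3⟩ := params_eq_of_equiv (hadm t) (hadm t') (e.trans e'.symm)
      rw [hr, hr] at h2 h3
      exact Prod.ext (Subtype.ext h1) (Prod.ext (Subtype.ext h2) (Subtype.ext h3))
    · rintro ⟨i, hi⟩
      obtain ⟨q', hq', ζ, a, l, h, ⟨e⟩⟩ := exists_clockShift_equiv hp hpm (V i)
      obtain rfl : q' = q := (hrank h e).symm.trans hi
      let t : primitiveRoots q' ℂ × Polynomial.nthRootsFinset d (1 : ℂ) ×
          Polynomial.nthRootsFinset d (1 : ℂ) :=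
        (⟨ζ, (mem_primitiveRoots (NeZero.pos q')).2 h.isPrimitiveRoot⟩,
          ⟨a ^ q', (Polynomial.mem_nthRootsFinset (NeZero.pos d) 1).2
            (by rw [← pow_mul, ← hd, h.pow_a])⟩,
          ⟨l ^ q', (Polynomial.mem_nthRootsFinset (NeZero.pos d) 1).2
            (by rw [← pow_mul, ← hd, h.pow_l])⟩)
      obtain ⟨e'⟩ := equiv_of_params_eq h (hadm t) (hr _).symm (hr _).symm
      exact ⟨t, Subtype.ext (hpairwise _ _ ⟨(hf t).some.symm.trans (e'.trans e)⟩)⟩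
  rw [← Nat.card_eq_of_bijective F hF]
  simp [Complex.card_primitiveRoots,
    (Complex.isPrimitiveRoot_exp d (NeZero.ne d)).card_nthRootsFinset, sq]

end Classification

end HrP

/-- For `G = Hr_p(ℤ/p^nℤ)` (`n ≥ 1`): `|G| = p^(2n+1)`; every irreducible
complex representation of `G` has degree `1` or `p`; there are exactly `p^(2n)` isomorphism
classes of degree `1`, and exactly `p^(2n-1) - p^(2n-2)` of degree `p`.  (The isomorphism
classes are encoded by a complete set `(V i)_{i : ι}` of pairwise non-isomorphic irreducible
representations.) -/
theorem HrP_ZModPow_card_and_degrees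
    (p : ℕ) (hp : p.Prime) (n : ℕ) (hn : 1 ≤ n)
    (ι : Type*) [Fintype ι]
    (V : ι → Type*) [∀ i, AddCommGroup (V i)]
    [∀ i, Module (MonoidAlgebra ℂ (HrP p (ZMod (p ^ n)))) (V i)]
    [∀ i, Module ℂ (V i)]
    [∀ i, IsScalarTower ℂ (MonoidAlgebra ℂ (HrP p (ZMod (p ^ n)))) (V i)]
    (hsimple : ∀ i, IsSimpleModule (MonoidAlgebra ℂ (HrP p (ZMod (p ^ n)))) (V i))
    (hfd : ∀ i, FiniteDimensional ℂ (V i))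
    (hpairwise : ∀ i j : ι,
      Nonempty (V i ≃ₗ[MonoidAlgebra ℂ (HrP p (ZMod (p ^ n)))] V j) → i = j)
    (hcomplete : ∀ (W : Type) [AddCommGroup W]
      [Module (MonoidAlgebra ℂ (HrP p (ZMod (p ^ n)))) W]
      [Module ℂ W] [IsScalarTower ℂ (MonoidAlgebra ℂ (HrP p (ZMod (p ^ n)))) W],
      IsSimpleModule (MonoidAlgebra ℂ (HrP p (ZMod (p ^ n)))) W → FiniteDimensional ℂ W →
        ∃ i : ι, Nonempty (W ≃ₗ[MonoidAlgebra ℂ (HrP p (ZMod (p ^ n)))] V i)) :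
    Nat.card (HrP p (ZMod (p ^ n))) = p ^ (2 * n + 1) ∧
      (∀ i : ι, Module.finrank ℂ (V i) = 1 ∨ Module.finrank ℂ (V i) = p) ∧
      Nat.card {i : ι // Module.finrank ℂ (V i) = 1} = p ^ (2 * n) ∧
      Nat.card {i : ι // Module.finrank ℂ (V i) = p} = p ^ (2 * n - 1) - p ^ (2 * n - 2) := by
  have hp0 := hp.ne_zero
  have : NeZero (p ^ n) := ⟨pow_ne_zero n hp0⟩
  have hpm : p ∣ p ^ n := dvd_pow_self p (by omega)
  obtain ⟨k, rfl⟩ : ∃ k, n = k + 1 := ⟨n - 1, by omega⟩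
  refine ⟨?_, fun i ↦ ?_, ?_, ?_⟩
  · rw [HrP.card_eq hp0 hpm, ← pow_mul, ← pow_succ, mul_comm 2]
  · have := hsimple i
    have := hfd i
    obtain ⟨q, _, ζ, a, l, h, ⟨e⟩⟩ := HrP.exists_clockShift_equiv hp0 hpm (V i)
    rw [← (e.restrictScalars ℂ).finrank_eq, HrP.finrank_clockShift]
    exact (Nat.dvd_prime hp).1 h.dvd_left
  · rw [HrP.card_finrank_eq V hp0 hpm hsimple hfd hpairwise hcomplete (one_dvd p)
      (one_mul _).symm, Nat.totient_one, one_mul, ← pow_mul, mul_comm 2]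
  · rw [HrP.card_finrank_eq V hp0 hpm hsimple hfd hpairwise hcomplete dvd_rfl (pow_succ' p k),
      Nat.totient_prime hp, ← pow_mul, Nat.sub_one_mul, ← pow_succ', mul_comm k]
    rfl
end
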